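/- arXiv:2207.09681 — 4 statements merged into one kernel-verified Lean document; each statement's English description precedes it below -/
import Mathlib

section
/- Let H be a triangle-cactus containing exactly t triangles. Then the maximum number of pairwise edge-disjoint cycles in the join K1∇H equals t, i.e., φ(K1∇H) = t(H). -/
open scoped Classical

namespace PaperEDC

/-- `G` contains `m` pairwise edge-disjoint cycles. -/
def HasEDC {V : Type*} (G : SimpleGraph V) (m : ℕ) : Prop :=
  ∃ c : Fin m → Σ v : V, G.Walk v v,
    (∀ i, (c i).2.IsCycle) ∧
    ∀ i j, i ≠ j → ∀ e ∈ (c i).2.edges, e ∉ (c j).2.edges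

/-- `φ(G)`: the maximum number of pairwise edge-disjoint cycles in `G`. -/
noncomputable def phi {V : Type*} (G : SimpleGraph V) : ℕ := sSup {m | HasEDC G m}

/-- `K₁ ∇ H`: the join of a single new vertex with `H`. -/
def joinK1 {V : Type*} (H : SimpleGraph V) : SimpleGraph (Option V) :=
  SimpleGraph.fromRel fun a b => a = none ∨ ∃ u v, a = some u ∧ b = some v ∧ H.Adj u v

/-- `t(G)`: the number of triangles of `G`. -/
noncomputable def triCount {V : Type*} (G : SimpleGraph V) : ℕ :=
  Nat.card {s : Finset V // G.IsNClique 3 s}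

/-- A triangle-cactus: a connected graph in which every edge lies on a cycle and every
cycle is a triangle. -/
def IsTriangleCactus {V : Type*} (G : SimpleGraph V) : Prop :=
  G.Connected ∧
  (∀ e ∈ G.edgeSet, ∃ (v : V) (w : G.Walk v v), w.IsCycle ∧ e ∈ w.edges) ∧
  ∀ (v : V) (w : G.Walk v v), w.IsCycle → w.length = 3

/-- `e(G)`: the number of edges of `G`. -/
noncomputable def ecard {V : Type*} (G : SimpleGraph V) : ℕ := Nat.card G.edgeSet

/-- `ρ(G)`: the spectral radius (largest adjacency eigenvalue) of `G`. -/
noncomputable def specRad {V : Type*} [Fintype V] (G : SimpleGraph V) : ℝ :=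
  sSup {x : ℝ | ∃ f : V → ℝ, f ≠ 0 ∧ ∀ v : V, ∑ u : V, (if G.Adj v u then f u else 0) = x * f v}

theorem tri_unique {V : Type*} {H : SimpleGraph V}
    (h4 : ∀ (v : V) (w : H.Walk v v), w.IsCycle → w.length = 3)
    {S T : Finset V} (hS : H.IsNClique 3 S) (hT : H.IsNClique 3 T) {v w : V} (hvw : v ≠ w)
    (hvS : v ∈ S) (hwS : w ∈ S) (hvT : v ∈ T) (hwT : w ∈ T) : S = T := by
  have key : ∀ S : Finset V, H.IsNClique 3 S → v ∈ S → w ∈ S →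
      ∃ x, x ≠ v ∧ x ≠ w ∧ S = {v, w, x} := by
    intro S hS hv hw
    have h1 : ((S.erase v).erase w).card = 1 := by
      rw [Finset.card_erase_of_mem (by simp [hw, hvw.symm]), Finset.card_erase_of_mem hv, hS.card_eq]
    obtain ⟨x, hx⟩ := Finset.card_eq_one.1 h1
    have hm : ∀ y, (y ≠ w ∧ y ≠ v ∧ y ∈ S) ↔ y = x := by
      intro y
      have := Finset.ext_iff.1 hx y
      simpa using this
    have := (hm x).2 rfl
    refine ⟨x, this.2.1, this.1, ?_⟩
    ext y
    have := hm y
    simp only [Finset.mem_insert, Finset.mem_singleton]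
    grind
  obtain ⟨x, hxv, hxw, rfl⟩ := key S hS hvS hwS
  obtain ⟨y, hyv, hyw, rfl⟩ := key T hT hvT hwT
  by_contra hne
  have hxy : x ≠ y := by rintro rfl; exact hne rfl
  have a1 : H.Adj v x := hS.isClique (by simp) (by simp) hxv.symm
  have a2 : H.Adj x w := hS.isClique (by simp) (by simp) hxw
  have a3 : H.Adj w y := hT.isClique (by simp) (by simp) hyw.symm
  have a4 : H.Adj y v := hT.isClique (by simp) (by simp) hyv
  have := h4 v (.cons a1 (.cons a2 (.cons a3 (.cons a4 .nil)))) (by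
    rw [SimpleGraph.Walk.cons_isCycle_iff]
    simp [SimpleGraph.Walk.cons_isPath_iff]
    grind)
  simp at this

theorem cycle3 {V : Type*} {H : SimpleGraph V} {v : V} (p : H.Walk v v) (hp : p.length = 3) :
    ∃ s : Finset V, H.IsNClique 3 s ∧ (∀ x ∈ s, ∀ y ∈ s, x ≠ y → s(x, y) ∈ p.edges) ∧
      ∀ x y, s(x, y) ∈ p.edges → x ∈ s ∧ y ∈ s := by
  match p, hp with
  | .cons (v := a) h1 (.cons (v := b) h2 (.cons h3 .nil)), _ =>
    refine ⟨{v, a, b}, ?_, ?_, ?_⟩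
    · rw [SimpleGraph.is3Clique_triple_iff]; exact ⟨h1, h3.symm, h2⟩
    · simp
    · simp
      grind

theorem joinK1_some {V : Type*} {H : SimpleGraph V} {u v : V} :
    (joinK1 H).Adj (some u) (some v) ↔ H.Adj u v := by
  simp only [joinK1, SimpleGraph.fromRel_adj]
  constructor
  · rintro ⟨_, (h | ⟨a, b, h1, h2, h⟩) | (h | ⟨a, b, h1, h2, h⟩)⟩
    · cases h
    · cases h1; cases h2; exact h
    · cases h
    · cases h1; cases h2; exact h.symm
  · intro h
    exact ⟨by simpa using h.ne, Or.inl (Or.inr ⟨u, v, rfl, rfl, h⟩)⟩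

def inc {V : Type*} (H : SimpleGraph V) : H →g joinK1 H where
  toFun := some
  map_rel' h := joinK1_some.2 h

theorem lift_walk {V : Type*} {H : SimpleGraph V} {a b : Option V} (p : (joinK1 H).Walk a b) :
    none ∉ p.support → ∀ u v (hu : a = some u) (hv : b = some v),
      ∃ q : H.Walk u v, q.map (inc H) = p.copy hu hv := by
  induction p with
  | nil =>
    intro _ u v hu hv
    subst hu
    cases hv
    exact ⟨.nil, rfl⟩
  | @cons a c b h p ih =>
    intro hn u v hu hv
    subst hu hv
    match c, h, p, ih, hn with
    | none, h, p, ih, hn => simp at hn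
    | some c, h, p, ih, hn =>
      obtain ⟨q, hq⟩ := ih (by simp at hn; exact hn) c v rfl rfl
      refine ⟨.cons (joinK1_some.1 h) q, ?_⟩
      simp only [SimpleGraph.Walk.map_cons, hq]
      rfl

theorem tri_of_cycle {V : Type*} {H : SimpleGraph V}
    (h4 : ∀ (v : V) (w : H.Walk v v), w.IsCycle → w.length = 3)
    {a : Option V} (p : (joinK1 H).Walk a a) (hp : p.IsCycle) (hn : none ∉ p.support) :
    ∃ s : Finset V, H.IsNClique 3 s ∧ ∀ x ∈ s, ∀ y ∈ s, x ≠ y → s(some x, some y) ∈ p.edges := by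
  match a, p, hp, hn with
  | none, p, hp, hn => simp at hn
  | some u, p, hp, hn =>
    obtain ⟨q, hq⟩ := lift_walk p hn u u rfl rfl
    simp only [SimpleGraph.Walk.copy_rfl_rfl] at hq
    subst hq
    have hinj : Function.Injective (inc H) := Option.some_injective V
    have hp : q.IsCycle := (SimpleGraph.Walk.isCycle_map_iff_of_injective hinj).1 hp
    obtain ⟨s, hs, h, _⟩ := cycle3 q (h4 _ _ hp)
    refine ⟨s, hs, fun x hx y hy hxy => ?_⟩
    have h7 : s(some x, some y) ∈ q.edges.map (Sym2.map (inc H)) :=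
      List.mem_map.2 ⟨_, h x hx y hy hxy, rfl⟩
    rw [← SimpleGraph.Walk.edges_map] at h7
    exact h7

theorem card_nbrs {V : Type*} [Fintype V] {G : SimpleGraph V} {a : V} (p : G.Walk a a)
    (hp : p.IsCycle) (v : V) :
    (Finset.univ.filter fun w => s(v, w) ∈ p.edges).card = if v ∈ p.support then 2 else 0 := by
  split_ifs with h
  · rw [← hp.ncard_neighborSet_toSubgraph_eq_two h, ← Set.ncard_coe_finset]
    congr 1
    ext w
    simp [SimpleGraph.Walk.adj_toSubgraph_iff_mem_edges]
  · rw [Finset.card_eq_zero, Finset.filter_eq_empty_iff]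
    intro w _ hw
    exact h (p.fst_mem_support_of_mem_edges hw)

theorem tri_odd {V : Type*} [Fintype V] (R : V → V → Prop) (hR : ∀ x y, R x y → R y x)
    (hirr : ∀ x, ¬ R x x) (T : Finset V) (hT : T.card = 3) :
    (T.filter fun v => Odd (T.filter fun w => R v w).card).card ≤ 2 ∧
    ((∀ x ∈ T, ∀ y ∈ T, x ≠ y → R x y) →
      (T.filter fun v => Odd (T.filter fun w => R v w).card).card = 0) := by
  obtain ⟨x, y, z, hxy, hxz, hyz, rfl⟩ := Finset.card_eq_three.1 hT
  have e1 : R y x ↔ R x y := ⟨hR _ _, hR _ _⟩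
  have e2 : R z x ↔ R x z := ⟨hR _ _, hR _ _⟩
  have e3 : R z y ↔ R y z := ⟨hR _ _, hR _ _⟩
  have o1 : Odd 1 := by decide
  have o2 : ¬ Odd 2 := by decide
  have o0 : ¬ Odd 0 := by decide
  constructor
  · by_cases h1 : R x y <;> by_cases h2 : R x z <;> by_cases h3 : R y z <;>
      simp [Finset.filter_insert, Finset.filter_singleton, hirr, e1, e2, e3, h1, h2, h3, hxy, hxz, hyz,
        o1, o2, o0]
  · intro h
    have h1 := h x (by simp) y (by simp) hxy
    have h2 := h x (by simp) z (by simp) hxz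
    have h3 := h y (by simp) z (by simp) hyz
    simp [Finset.filter_insert, Finset.filter_singleton, hirr, e1, e2, e3, h1, h2, h3, hxy, hxz, hyz,
        o1, o2, o0]

theorem lower {V : Type*} [Fintype V] (H : SimpleGraph V)
    (h4 : ∀ (v : V) (w : H.Walk v v), w.IsCycle → w.length = 3) :
    HasEDC (joinK1 H) (triCount H) := by
  have hc : ∀ T : {s : Finset V // H.IsNClique 3 s}, ∃ c : Σ v : Option V, (joinK1 H).Walk v v,
      c.2.IsCycle ∧ ∀ e ∈ c.2.edges, ∃ x ∈ T.1, ∃ y ∈ T.1, x ≠ y ∧ e = s(some x, some y) := by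
    rintro ⟨T, hT⟩
    obtain ⟨x, y, z, hxy, hxz, hyz, rfl⟩ := SimpleGraph.is3Clique_iff.1 hT
    refine ⟨⟨some x, .cons (joinK1_some.2 hxy) (.cons (joinK1_some.2 hyz)
      (.cons (joinK1_some.2 hxz.symm) .nil))⟩, ?_, ?_⟩
    · have := hxy.ne
      have := hxz.ne
      have := hyz.ne
      simp [SimpleGraph.Walk.cons_isCycle_iff, SimpleGraph.Walk.cons_isPath_iff]
      grind
    · intro e he
      simp at he
      rcases he with rfl | rfl | rfl
      · exact ⟨x, by simp, y, by simp, hxy.ne, rfl⟩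
      · exact ⟨y, by simp, z, by simp, hyz.ne, rfl⟩
      · exact ⟨z, by simp, x, by simp, hxz.ne', rfl⟩
  choose c hc1 hc2 using hc
  let f := (Finite.equivFin {s : Finset V // H.IsNClique 3 s}).symm
  refine ⟨fun i => c (f i), fun i => hc1 _, fun i j hij e he he' => hij ?_⟩
  apply f.injective
  obtain ⟨x, hx, y, hy, hxy, rfl⟩ := hc2 _ e he
  obtain ⟨x', hx', y', hy', hxy', h⟩ := hc2 _ _ he'
  apply Subtype.ext
  have : x ∈ (f j).1 ∧ y ∈ (f j).1 := by
    simp at h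
    grind
  exact tri_unique h4 (f i).2 (f j).2 hxy hx hy this.1 this.2

theorem upper {V : Type*} [Fintype V] (H : SimpleGraph V)
    (hE : ∀ e ∈ H.edgeSet, ∃ (v : V) (w : H.Walk v v), w.IsCycle ∧ e ∈ w.edges)
    (h4 : ∀ (v : V) (w : H.Walk v v), w.IsCycle → w.length = 3) (m : ℕ)
    (hm : HasEDC (joinK1 H) m) : m ≤ triCount H := by
  obtain ⟨c, hc, hd⟩ := hm
  let TT : Finset (Finset V) := Finset.univ.filter fun s => H.IsNClique 3 s
  have htc : triCount H = TT.card := by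
    simp [triCount, TT, Nat.card_eq_fintype_card, Fintype.card_subtype]
  have mTT : ∀ s, s ∈ TT ↔ H.IsNClique 3 s := by simp [TT]
  have htri : ∀ x y, H.Adj x y → ∃ T ∈ TT, x ∈ T ∧ y ∈ T := by
    intro x y h
    obtain ⟨v, w, hw, he⟩ := hE s(x, y) h
    obtain ⟨s, hs, _, h2⟩ := cycle3 w (h4 v w hw)
    exact ⟨s, (mTT s).2 hs, h2 x y he⟩
  let R : V → V → Prop := fun v w => ∃ i, s(some v, some w) ∈ (c i).2.edges
  have hRs : ∀ x y, R x y → R y x := by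
    rintro x y ⟨i, hi⟩
    exact ⟨i, by rwa [Sym2.eq_swap]⟩
  have hRa : ∀ x y, R x y → H.Adj x y := by
    rintro x y ⟨i, hi⟩
    exact joinK1_some.1 ((c i).2.adj_of_mem_edges hi)
  have hirr : ∀ x, ¬ R x x := fun x h => (hRa x x h).ne rfl
  let B : Finset (Fin m) := Finset.univ.filter fun i => none ∈ (c i).2.support
  let Xi : Fin m → Finset V := fun i => Finset.univ.filter fun v => s(none, some v) ∈ (c i).2.edges
  have hXi : ∀ i ∈ B, (Xi i).card = 2 := by
    intro i hi
    have h1 := card_nbrs (c i).2 (hc i) none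
    rw [if_pos (by simpa [B] using hi)] at h1
    rw [← h1, ← Finset.card_map Function.Embedding.some]
    congr 1
    ext w
    cases w with
    | none =>
      simp only [Finset.mem_map, Finset.mem_filter, Finset.mem_univ, true_and]
      constructor
      · rintro ⟨a, _, h⟩; cases h
      · intro h; exact absurd rfl ((c i).2.adj_of_mem_edges h).ne
    | some w => simp [Xi]
  let X : Finset V := B.biUnion Xi
  have hX : X.card = 2 * B.card := by
    rw [Finset.card_biUnion, Finset.sum_congr rfl hXi, Finset.sum_const, smul_eq_mul, mul_comm]
    intro i _ j _ hij
    rw [Function.onFun, Finset.disjoint_left]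
    intro v hi hj
    simp only [Xi, Finset.mem_filter, Finset.mem_univ, true_and] at hi hj
    exact hd i j hij _ hi hj
  let D : V → Finset V := fun v => Finset.univ.filter fun w => R v w
  have hD : ∀ v ∈ X, Odd (D v).card := by
    intro v hv
    have hv' : ∃ i, s(none, some v) ∈ (c i).2.edges := by
      simp only [X, Xi, Finset.mem_biUnion, Finset.mem_filter] at hv
      obtain ⟨i, _, _, h⟩ := hv
      exact ⟨i, h⟩
    let D' : Finset (Option V) := Finset.univ.biUnion fun i : Fin m =>
      Finset.univ.filter fun w => s(some v, w) ∈ (c i).2.edges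
    have hev : Even D'.card := by
      rw [Finset.card_biUnion]
      · apply Finset.even_sum
        intro i _
        have h2 := card_nbrs (c i).2 (hc i) (some v)
        have h3 : Even (Finset.univ.filter fun w => s(some v, w) ∈ (c i).2.edges).card := by
          split_ifs at h2
          · exact ⟨1, by convert h2⟩
          · exact ⟨0, by convert h2⟩
        convert h3
      · intro i _ j _ hij
        rw [Function.onFun, Finset.disjoint_left]
        intro w hi hj
        simp only [Finset.mem_filter, Finset.mem_univ, true_and] at hi hj
        exact hd i j hij _ hi hj
    have hDD : D' = insert none ((D v).map Function.Embedding.some) := by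
      ext w
      cases w with
      | none =>
        obtain ⟨i, hi⟩ := hv'
        rw [Sym2.eq_swap] at hi
        simp only [D', Finset.mem_biUnion, Finset.mem_filter, Finset.mem_univ, true_and,
          Finset.mem_insert, true_or, iff_true]
        exact ⟨i, hi⟩
      | some w => simp [D', D, R]
    rw [hDD, Finset.card_insert_of_notMem (by simp), Finset.card_map] at hev
    grind
  let g : Finset V → Finset V := fun T => T.filter fun v => Odd (T.filter fun w => R v w).card
  have hcov : X ⊆ TT.biUnion g := by
    intro v hv
    by_contra hcon
    have hno : ∀ T ∈ TT, v ∈ T → Even (T.filter fun w => R v w).card := by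
      intro T hT hvT
      by_contra ho
      rw [Nat.not_even_iff_odd] at ho
      exact hcon (Finset.mem_biUnion.2 ⟨T, hT, Finset.mem_filter.2 ⟨hvT, ho⟩⟩)
    have hodd := hD v hv
    have hdec : D v = (TT.filter fun T => v ∈ T).biUnion fun T => T.filter fun w => R v w := by
      ext w
      simp only [D, Finset.mem_filter, Finset.mem_univ, true_and, Finset.mem_biUnion]
      constructor
      · intro h
        obtain ⟨T, hT, h1, h2⟩ := htri v w (hRa v w h)
        exact ⟨T, ⟨hT, h1⟩, h2, h⟩
      · rintro ⟨T, _, _, h⟩; exact h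
    rw [hdec, Finset.card_biUnion, ← Nat.not_even_iff_odd] at hodd
    · apply hodd
      apply Finset.even_sum
      intro T hT
      rw [Finset.mem_filter] at hT
      exact hno T hT.1 hT.2
    · intro S hS T hT hST
      rw [Function.onFun, Finset.disjoint_left]
      intro w h1 h2
      simp only [Finset.coe_filter, Set.mem_setOf_eq, Finset.mem_filter, mTT] at hS hT h1 h2
      exact hST (tri_unique h4 hS.1 hT.1 (hRa v w h1.2).ne hS.2 h1.1 hT.2 h2.1)
  have hA : ∀ i : Fin m, ∃ s : Finset V, i ∈ Bᶜ → (H.IsNClique 3 s ∧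
      ∀ x ∈ s, ∀ y ∈ s, x ≠ y → s(some x, some y) ∈ (c i).2.edges) := by
    intro i
    by_cases hi : i ∈ Bᶜ
    · obtain ⟨s, hs⟩ := tri_of_cycle h4 (c i).2 (hc i) (by simpa [B] using hi)
      exact ⟨s, fun _ => hs⟩
    · exact ⟨∅, fun h => absurd h hi⟩
  choose τ hτ using hA
  let AT : Finset (Finset V) := Bᶜ.image τ
  have hATc : AT.card = Bᶜ.card := by
    apply Finset.card_image_of_injOn
    intro i hi j hj hij
    by_contra hne
    have h1 := hτ i hi
    have h2 := hτ j hj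
    rw [← hij] at h2
    obtain ⟨x, hx, y, hy, hxy⟩ := Finset.one_lt_card.1 (by rw [h1.1.card_eq]; decide : 1 < (τ i).card)
    exact hd i j hne _ (h1.2 x hx y hy hxy) (h2.2 x hx y hy hxy)
  have hATs : AT ⊆ TT := by
    intro s hs
    obtain ⟨i, hi, rfl⟩ := Finset.mem_image.1 hs
    exact (mTT _).2 (hτ i hi).1
  have hcov2 : X ⊆ (TT \ AT).biUnion g := by
    intro v hv
    obtain ⟨T, hT, hvT⟩ := Finset.mem_biUnion.1 (hcov hv)
    refine Finset.mem_biUnion.2 ⟨T, Finset.mem_sdiff.2 ⟨hT, fun hA => ?_⟩, hvT⟩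
    obtain ⟨i, hi, rfl⟩ := Finset.mem_image.1 hA
    have h0 := (tri_odd R hRs hirr (τ i) (hτ i hi).1.card_eq).2
      (fun x hx y hy hxy => ⟨i, (hτ i hi).2 x hx y hy hxy⟩)
    rw [Finset.card_eq_zero] at h0
    have h5 : g (τ i) = ∅ := by
      rw [← h0]
      simp only [g]
      congr!
    rw [h5] at hvT
    simp at hvT
  have hb : X.card ≤ (TT \ AT).card * 2 :=
    (Finset.card_le_card hcov2).trans (Finset.card_biUnion_le_card_mul _ _ _ fun T hT => by
      have h6 := (tri_odd R hRs hirr T ((mTT T).1 (Finset.mem_sdiff.1 hT).1).card_eq).1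
      convert h6)
  have h1 := Finset.card_sdiff_add_card_eq_card hATs
  have h2 := Finset.card_add_card_compl B
  rw [Fintype.card_fin] at h2
  omega

/-- If `H` is a triangle-cactus with `t` triangles, then `φ(K₁ ∇ H) = t(H)`. -/
theorem phi_joinK1_of_triangleCactus {V : Type*} [Fintype V] (H : SimpleGraph V)
    (hH : IsTriangleCactus H) :
    phi (joinK1 H) = triCount H := by
  have hub : ∀ m ∈ {m | HasEDC (joinK1 H) m}, m ≤ triCount H :=
    fun m hm => upper H hH.2.1 hH.2.2 m hm
  exact le_antisymm (csSup_le' hub) (le_csSup ⟨_, hub⟩ (lower H hH.2.2))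

end PaperEDC
end

section
/- Let T be a tree and let G be the graph obtained from the disjoint union of T and a single new vertex u* by adding t edges joining u* to t distinct vertices of T, where 1 ≤ t ≤ v(T). Then φ(G) = ⌊t/2⌋. -/
open scoped Classical

namespace PaperEDC

/-- The graph obtained from a tree `T` and a new vertex `u*` by joining `u*` to a set `S`
of vertices of `T`. -/
def attachK1 {V : Type*} (T : SimpleGraph V) (S : Set V) : SimpleGraph (Option V) :=
  SimpleGraph.fromRel fun a b =>
    (a = none ∧ ∃ v ∈ S, b = some v) ∨ ∃ u v, a = some u ∧ b = some v ∧ T.Adj u v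

theorem attach_some {V : Type*} (T : SimpleGraph V) (S : Set V) (a b : V) :
    (attachK1 T S).Adj (some a) (some b) ↔ T.Adj a b := by
  simp only [attachK1, SimpleGraph.fromRel_adj]
  constructor
  · rintro ⟨_, h⟩
    simp at h
    rcases h with h | h
    · exact h
    · exact h.symm
  · intro h
    refine ⟨by simpa using h.ne, Or.inl (Or.inr ⟨a, b, rfl, rfl, h⟩)⟩

theorem attach_none {V : Type*} (T : SimpleGraph V) (S : Set V) (b : V) :
    (attachK1 T S).Adj none (some b) ↔ b ∈ S := by
  simp [attachK1, SimpleGraph.fromRel_adj]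

theorem none_mem {V : Type*} (T : SimpleGraph V) (hT : T.IsAcyclic) (S : Set V) (v : Option V)
    (w : (attachK1 T S).Walk v v) (hw : w.IsCycle) : none ∈ w.support := by
  by_contra hn
  have hs : ∀ x ∈ w.support, x ∈ {x : Option V | x.isSome} := by
    intro x hx
    cases x with
    | none => exact absurd hx hn
    | some x => simp
  let f : (attachK1 T S).induce {x : Option V | x.isSome} →g T :=
    { toFun := fun x => x.1.get x.2
      map_rel' := by
        rintro ⟨a, ha⟩ ⟨b, hb⟩ h
        cases a with
        | none => simp at ha
        | some a =>
          cases b with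
          | none => simp at hb
          | some b => exact (attach_some T S a b).1 h }
  have hf : Function.Injective f := by
    rintro ⟨a, ha⟩ ⟨b, hb⟩ h
    exact Subtype.ext (Option.get_inj.1 h)
  have hac := hT.comap f hf
  have hm := SimpleGraph.Walk.map_induce w hs
  refine hac (w.induce _ hs) (SimpleGraph.Walk.IsCycle.of_map (f := (SimpleGraph.Embedding.induce _).toHom) ?_)
  rw [hm]
  exact hw

theorem two_spokes {V : Type*} (T : SimpleGraph V) (hT : T.IsAcyclic) (S : Finset V)
    (v : Option V) (w : (attachK1 T (S : Set V)).Walk v v) (hw : w.IsCycle) :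
    2 ≤ (S.filter fun x => s(none, some x) ∈ w.edges).card := by
  have hn := none_mem T hT _ v w hw
  have hc := hw.rotate hn
  have hed : ∀ e, e ∈ (w.rotate none hn).edges → e ∈ w.edges := fun e he =>
    (w.rotate_edges none hn).mem_iff.1 he
  have key : ∀ y, s(none, y) ∈ w.edges → ∃ x ∈ S, y = some x := by
    intro y hy
    have := w.adj_of_mem_edges hy
    cases y with
    | none => exact absurd rfl this.ne
    | some x => exact ⟨x, by simpa using (attach_none T _ x).1 this, rfl⟩
  have h1 := hed _ (SimpleGraph.Walk.mk_start_snd_mem_edges hc.not_nil)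
  have h2 := hed _ (SimpleGraph.Walk.mk_penultimate_end_mem_edges hc.not_nil)
  rw [Sym2.eq_swap] at h2
  have hne := hc.snd_ne_penultimate
  obtain ⟨x, hx, ex⟩ := key _ h1
  obtain ⟨y, hy, ey⟩ := key _ h2
  rw [ex] at h1 hne
  rw [ey] at h2 hne
  refine Finset.one_lt_card.2 ⟨x, by simp [hx, h1], y, by simp [hy, h2], ?_⟩
  rintro rfl
  exact hne rfl

theorem upper_s2 {V : Type*} (T : SimpleGraph V) (hT : T.IsAcyclic) (S : Finset V) (m : ℕ)
    (h : HasEDC (attachK1 T (S : Set V)) m) : m ≤ S.card / 2 := by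
  obtain ⟨c, hc, hd⟩ := h
  have h1 : ∑ i : Fin m, (S.filter fun x => s(none, some x) ∈ (c i).2.edges).card ≤ S.card := by
    rw [← Finset.card_biUnion]
    · apply Finset.card_le_card
      intro x hx
      simp at hx
      exact hx.1
    · intro i _ j _ hij
      change Disjoint _ _
      rw [Finset.disjoint_left]
      intro x hx hx'
      simp at hx hx'
      exact hd i j hij _ hx.2 hx'.2
  have h2 : ∑ i : Fin m, 2 ≤ ∑ i : Fin m,
      (S.filter fun x => s(none, some x) ∈ (c i).2.edges).card :=
    Finset.sum_le_sum fun i _ => two_spokes T hT S _ _ (hc i)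
  simp at h2
  omega

theorem walk_split {V : Type*} (T : SimpleGraph V) (hT : T.Connected) (a b : V) {x y : V}
    (p : T.Walk x y) (h : s(a, b) ∈ p.edges) :
    T.dist x a + 1 + T.dist b y ≤ p.length ∨ T.dist x b + 1 + T.dist a y ≤ p.length := by
  induction p with
  | nil => simp at h
  | @cons u v w hadj p ih =>
    have hd := SimpleGraph.dist_le p
    have huv : T.dist u v = 1 := SimpleGraph.dist_eq_one_iff_adj.2 hadj
    simp only [SimpleGraph.Walk.edges_cons, List.mem_cons, SimpleGraph.Walk.length_cons] at h ⊢
    rcases h with h | h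
    · rcases Sym2.eq_iff.1 h with ⟨rfl, rfl⟩ | ⟨rfl, rfl⟩
      · left; simp; omega
      · right; simp; omega
    · have ta := hT.dist_triangle (u := u) (v := v) (w := a)
      have tb := hT.dist_triangle (u := u) (v := v) (w := b)
      rcases ih h with h | h
      · left; omega
      · right; omega

theorem sum_two_lt {m : ℕ} (f g : Fin m → ℕ) (i j : Fin m) (hij : i ≠ j)
    (h : f i + f j < g i + g j) (ho : ∀ k, k ≠ i → k ≠ j → f k = g k) :
    ∑ k, f k < ∑ k, g k := by
  have hj : j ∈ Finset.univ.erase i := by simp [hij.symm]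
  rw [← Finset.add_sum_erase _ f (Finset.mem_univ i), ← Finset.add_sum_erase _ g (Finset.mem_univ i),
    ← Finset.add_sum_erase _ f hj, ← Finset.add_sum_erase _ g hj]
  have : ∑ k ∈ (Finset.univ.erase i).erase j, f k = ∑ k ∈ (Finset.univ.erase i).erase j, g k := by
    apply Finset.sum_congr rfl
    intro k hk
    simp at hk
    exact ho k hk.2 hk.1
  omega

theorem exists_pairing {V : Type*} (T : SimpleGraph V) (hT : T.Connected) (S : Finset V) :
    ∃ p : Fin (S.card / 2) × Bool → V, Function.Injective p ∧ (∀ z, p z ∈ S) ∧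
      ∀ i j, i ≠ j → ∀ (P : T.Walk (p (i, false)) (p (i, true)))
        (Q : T.Walk (p (j, false)) (p (j, true))),
        P.length = T.dist (p (i, false)) (p (i, true)) →
        Q.length = T.dist (p (j, false)) (p (j, true)) → ∀ e ∈ P.edges, e ∉ Q.edges := by
  have hne : ∃ n : ℕ, ∃ p : Fin (S.card / 2) × Bool → V, Function.Injective p ∧ (∀ z, p z ∈ S) ∧
      ∑ k, T.dist (p (k, false)) (p (k, true)) = n := by
    have : Fintype.card (Fin (S.card / 2) × Bool) ≤ Fintype.card S := by
      simp; omega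
    obtain ⟨e⟩ := Function.Embedding.nonempty_of_card_le this
    exact ⟨_, fun z => (e z : V), fun a b h => e.injective (Subtype.ext h), fun z => (e z).2, rfl⟩
  obtain ⟨p, hp, hpS, hsum⟩ := Nat.find_spec hne
  have hmin : ∀ σ : Equiv.Perm (Fin (S.card / 2) × Bool),
      ∑ k, T.dist (p (k, false)) (p (k, true)) ≤
      ∑ k, T.dist (p (σ (k, false))) (p (σ (k, true))) := by
    intro σ
    rw [hsum]
    exact Nat.find_min' hne ⟨p ∘ σ, hp.comp σ.injective, fun z => hpS _, rfl⟩
  refine ⟨p, hp, hpS, ?_⟩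
  intro i j hij P Q hP hQ e heP heQ
  induction e with | _ a b =>
  have s1 := walk_split T hT a b P heP
  have s2 := walk_split T hT a b Q heQ
  have A : ¬ (T.dist (p (i, false)) (p (j, false)) + T.dist (p (i, true)) (p (j, true)) <
      T.dist (p (i, false)) (p (i, true)) + T.dist (p (j, false)) (p (j, true))) := by
    intro hlt
    refine absurd (hmin (Equiv.swap (i, true) (j, false))) (not_le.2 ?_)
    refine sum_two_lt _ _ i j hij ?_ ?_
    · simpa [Equiv.swap_apply_def, hij, hij.symm] using hlt
    · intro k h1 h2
      simp [Equiv.swap_apply_def, h1, h2]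
  have B : ¬ (T.dist (p (i, false)) (p (j, true)) + T.dist (p (j, false)) (p (i, true)) <
      T.dist (p (i, false)) (p (i, true)) + T.dist (p (j, false)) (p (j, true))) := by
    intro hlt
    refine absurd (hmin (Equiv.swap (i, true) (j, true))) (not_le.2 ?_)
    refine sum_two_lt _ _ i j hij ?_ ?_
    · simpa [Equiv.swap_apply_def, hij, hij.symm] using hlt
    · intro k h1 h2
      simp [Equiv.swap_apply_def, h1, h2]
  generalize p (i, false) = x at *
  generalize p (i, true) = y at *
  generalize p (j, false) = x' at *
  generalize p (j, true) = y' at *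
  have t := fun u v w => hT.dist_triangle (u := u) (v := v) (w := w)
  have c := fun u v => T.dist_comm (u := u) (v := v)
  have := t x a x'; have := t x b x'; have := t y a y'; have := t y b y'
  have := t x a y'; have := t x b y'; have := t x' a y; have := t x' b y
  have := c a x'; have := c b x'; have := c a y; have := c b y
  have := c a y'; have := c b y'
  omega

def someHom {V : Type*} (T : SimpleGraph V) (S : Set V) : T →g attachK1 T S where
  toFun := some
  map_rel' := fun h => (attach_some T S _ _).2 h

def liftW {V : Type*} (T : SimpleGraph V) (S : Set V) {x y : V} (P : T.Walk x y) :
    (attachK1 T S).Walk (some x) (some y) := P.map (someHom T S)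

theorem liftW_edges {V : Type*} (T : SimpleGraph V) (S : Set V) {x y : V} (P : T.Walk x y) :
    (liftW T S P).edges = P.edges.map (Sym2.map some) :=
  SimpleGraph.Walk.edges_map (someHom T S) P

theorem liftW_support {V : Type*} (T : SimpleGraph V) (S : Set V) {x y : V} (P : T.Walk x y) :
    (liftW T S P).support = P.support.map some :=
  SimpleGraph.Walk.support_map (someHom T S) P

theorem liftW_isPath {V : Type*} (T : SimpleGraph V) (S : Set V) {x y : V} (P : T.Walk x y)
    (hP : P.IsPath) : (liftW T S P).IsPath :=
  SimpleGraph.Walk.map_isPath_of_injective (f := someHom T S) (Option.some_injective V) hP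

def mkCycle {V : Type*} (T : SimpleGraph V) (S : Set V) {x y : V} (hx : x ∈ S) (hy : y ∈ S)
    (P : T.Walk x y) : (attachK1 T S).Walk none none :=
  SimpleGraph.Walk.cons ((attach_none T S x).2 hx)
    ((liftW T S P).concat ((attach_none T S y).2 hy).symm)

theorem mkCycle_edges {V : Type*} (T : SimpleGraph V) (S : Set V) {x y : V} (hx : x ∈ S)
    (hy : y ∈ S) (P : T.Walk x y) (e : Sym2 (Option V)) :
    e ∈ (mkCycle T S hx hy P).edges ↔
      e = s(none, some x) ∨ e = s(none, some y) ∨ ∃ d ∈ P.edges, Sym2.map some d = e := by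
  simp only [mkCycle, SimpleGraph.Walk.edges_cons, SimpleGraph.Walk.edges_concat,
    liftW_edges, List.mem_cons, List.concat_eq_append, List.mem_append,
    List.mem_map, List.not_mem_nil, or_false]
  have : (s(some y, none) : Sym2 (Option V)) = s(none, some y) := Sym2.eq_swap
  change e = s(none, some x) ∨ ((∃ d ∈ P.edges, Sym2.map some d = e) ∨ e = s(some y, none)) ↔ _
  rw [this]
  exact or_congr Iff.rfl or_comm

theorem map_some_ne {V : Type*} (d : Sym2 V) (x : V) : Sym2.map some d ≠ s(none, some x) := by
  induction d with | _ a b =>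
  simp

theorem mkCycle_isCycle {V : Type*} (T : SimpleGraph V) (S : Set V) {x y : V} (hx : x ∈ S)
    (hy : y ∈ S) (hxy : x ≠ y) (P : T.Walk x y) (hP : P.IsPath) :
    (mkCycle T S hx hy P).IsCycle := by
  rw [mkCycle, SimpleGraph.Walk.cons_isCycle_iff]
  constructor
  · rw [SimpleGraph.Walk.concat_isPath_iff]
    refine ⟨liftW_isPath T S P hP, ?_⟩
    simp [liftW_support]
  · simp only [SimpleGraph.Walk.edges_concat, liftW_edges,
      List.concat_eq_append, List.mem_append, List.mem_map, List.mem_singleton, not_or]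
    refine ⟨?_, ?_⟩
    · rintro ⟨d, _, hd⟩
      exact map_some_ne d x hd
    · change ¬ (s(none, some x) : Sym2 (Option V)) = s(some y, none)
      simp [hxy]

theorem lower_s2 {V : Type*} (T : SimpleGraph V) (hT : T.Connected) (S : Finset V) :
    HasEDC (attachK1 T (S : Set V)) (S.card / 2) := by
  obtain ⟨p, hp, hpS, hd⟩ := exists_pairing T hT S
  choose P hP hPl using fun i => hT.exists_path_of_dist (p (i, false)) (p (i, true))
  refine ⟨fun i => ⟨none, mkCycle T (S : Set V) (hpS (i, false)) (hpS (i, true)) (P i)⟩, ?_, ?_⟩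
  · intro i
    refine mkCycle_isCycle T _ (hpS (i, false)) (hpS (i, true)) (fun h => ?_) _ (hP i)
    simpa using hp h
  · intro i j hij e he he'
    rw [mkCycle_edges] at he he'
    have inj : ∀ a b, (s(none, some (p (i, a))) : Sym2 (Option V)) ≠ s(none, some (p (j, b))) := by
      intro a b h
      have h' : p (i, a) = p (j, b) := by simpa using h
      exact hij (Prod.ext_iff.1 (hp h')).1
    rcases he with rfl | rfl | ⟨d, hd1, rfl⟩
    · rcases he' with h | h | ⟨d', _, h⟩
      · exact inj _ _ h
      · exact inj _ _ h
      · exact map_some_ne _ _ h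
    · rcases he' with h | h | ⟨d', _, h⟩
      · exact inj _ _ h
      · exact inj _ _ h
      · exact map_some_ne _ _ h
    · rcases he' with h | h | ⟨d', hd2, h⟩
      · exact map_some_ne _ _ h
      · exact map_some_ne _ _ h
      · have := Sym2.map.injective (Option.some_injective V) h
        subst this
        exact hd i j hij _ _ (hPl i) (hPl j) _ hd1 hd2

/-- If `G` is obtained from a tree `T` and a new vertex `u*` by adding `t` edges between
`u*` and `T` (`1 ≤ t ≤ v(T)`), then `φ(G) = ⌊t/2⌋`. -/
theorem phi_attachK1_tree {V : Type*} [Fintype V] (T : SimpleGraph V) (hT : T.IsTree)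
    (S : Finset V) (hS : 1 ≤ S.card) :
    phi (attachK1 T (S : Set V)) = S.card / 2 := by
  exact IsGreatest.csSup_eq ⟨lower_s2 T hT.connected S, fun m hm => upper_s2 T hT.isAcyclic S m hm⟩

end PaperEDC
end

section
/- Let G be a 2-connected simple graph. Then φ(G) ≥ ⌊Δ(G)/2⌋, where Δ(G) is the maximum degree of G. -/
open scoped Classical

namespace PaperEDC

/-- `Δ(G)`: the maximum degree of `G`. -/
noncomputable def maxDeg {V : Type*} [Fintype V] (G : SimpleGraph V) : ℕ :=
  Finset.univ.sup fun v => Nat.card (G.neighborSet v)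

lemma dist_of_mem_edges {W : Type*} {H : SimpleGraph W} (hH : H.Connected) {a b : W}
    (p : H.Walk a b) (x y : W) (h : s(x, y) ∈ p.edges) :
    H.dist a x + 1 + H.dist y b ≤ p.length ∨ H.dist a y + 1 + H.dist x b ≤ p.length := by
  induction p with
  | nil => simp at h
  | @cons u v w hadj q ih =>
    simp only [SimpleGraph.Walk.edges_cons, List.mem_cons, SimpleGraph.Walk.length_cons] at h ⊢
    have hq := SimpleGraph.dist_le q
    have h1 : H.dist u v = 1 := SimpleGraph.dist_eq_one_iff_adj.2 hadj
    rcases h with h | h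
    · rcases Sym2.eq_iff.1 h with ⟨rfl, rfl⟩ | ⟨rfl, rfl⟩
      · left; simp; omega
      · right; simp; omega
    · have t1 := hH.dist_triangle (u := u) (v := v) (w := x)
      have t2 := hH.dist_triangle (u := u) (v := v) (w := y)
      rcases ih h with h | h
      · left; omega
      · right; omega

lemma sum_split {ι : Type*} [Fintype ι] [DecidableEq ι] (D : ι → ℕ) {i j : ι} (hij : i ≠ j) :
    ∑ l, D l = D i + D j + ∑ l ∈ (Finset.univ.erase i).erase j, D l := by
  rw [← Finset.add_sum_erase _ D (Finset.mem_univ i),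
    ← Finset.add_sum_erase (Finset.univ.erase i) D (a := j) (by simp [hij.symm])]
  ring

lemma exists_pairing_s4 {W : Type*} {H : SimpleGraph W} (hH : H.Connected) {k : ℕ}
    (f : Fin k × Bool → W) :
    ∃ σ : Equiv.Perm (Fin k × Bool),
      ∃ p : ∀ i : Fin k, H.Walk (f (σ (i, false))) (f (σ (i, true))),
        (∀ i, (p i).IsPath) ∧ ∀ i j, i ≠ j → ∀ e ∈ (p i).edges, e ∉ (p j).edges := by
  obtain ⟨σ, hσ⟩ := Finite.exists_min (fun σ : Equiv.Perm (Fin k × Bool) =>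
    ∑ l, H.dist (f (σ (l, false))) (f (σ (l, true))))
  choose p hp hl using fun i : Fin k =>
    hH.exists_path_of_dist (f (σ (i, false))) (f (σ (i, true)))
  refine ⟨σ, p, hp, ?_⟩
  intro i j hij e hei hej
  induction e using Sym2.ind with
  | _ x y =>
  have key : ∀ τ : Equiv.Perm (Fin k × Bool),
      (∀ l, l ≠ i → l ≠ j → ∀ b, τ (l, b) = (l, b)) →
      (p i).length + (p j).length ≤
        H.dist (f (σ (τ (i, false)))) (f (σ (τ (i, true)))) +
        H.dist (f (σ (τ (j, false)))) (f (σ (τ (j, true)))) := by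
    intro τ hτ
    have h := hσ (τ.trans σ)
    simp only [Equiv.trans_apply] at h
    rw [sum_split _ hij, sum_split (fun l => H.dist (f (σ (τ (l, false)))) (f (σ (τ (l, true))))) hij] at h
    have : ∑ l ∈ (Finset.univ.erase i).erase j,
        H.dist (f (σ (τ (l, false)))) (f (σ (τ (l, true)))) =
        ∑ l ∈ (Finset.univ.erase i).erase j, H.dist (f (σ (l, false))) (f (σ (l, true))) := by
      refine Finset.sum_congr rfl fun l hl => ?_
      simp only [Finset.mem_erase, Finset.mem_univ, and_true] at hl
      rw [hτ l hl.2 hl.1, hτ l hl.2 hl.1]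
    rw [hl, hl]
    omega
  have k1 := key (Equiv.swap (i, true) (j, false)) (fun l h1 h2 b =>
    Equiv.swap_apply_of_ne_of_ne (by simp [h1]) (by simp [h2]))
  have k2 := key (Equiv.swap (i, true) (j, true)) (fun l h1 h2 b =>
    Equiv.swap_apply_of_ne_of_ne (by simp [h1]) (by simp [h2]))
  have e1 : (Equiv.swap (i, true) (j, false)) (i, false) = (i, false) :=
    Equiv.swap_apply_of_ne_of_ne (by simp) (by simp [hij])
  have e2 : (Equiv.swap (i, true) (j, false)) (j, true) = (j, true) :=
    Equiv.swap_apply_of_ne_of_ne (by simp [hij.symm]) (by simp)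
  have e3 : (Equiv.swap (i, true) (j, true)) (i, false) = (i, false) :=
    Equiv.swap_apply_of_ne_of_ne (by simp) (by simp)
  have e4 : (Equiv.swap (i, true) (j, true)) (j, false) = (j, false) :=
    Equiv.swap_apply_of_ne_of_ne (by simp) (by simp)
  rw [e1, e2, Equiv.swap_apply_left, Equiv.swap_apply_right] at k1
  rw [e3, e4, Equiv.swap_apply_left, Equiv.swap_apply_right] at k2
  have T : ∀ u v w, H.dist u w ≤ H.dist u v + H.dist v w := fun u v w => hH.dist_triangle
  have C : ∀ u v, H.dist u v = H.dist v u := fun u v => SimpleGraph.dist_comm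
  have hi := dist_of_mem_edges hH (p i) x y hei
  have hj := dist_of_mem_edges hH (p j) x y hej
  generalize (p i).length = li at *
  generalize (p j).length = lj at *
  clear hei hej key hl hp hσ
  generalize f (σ (i, false)) = a at *
  generalize f (σ (i, true)) = b at *
  generalize f (σ (j, false)) = c at *
  generalize f (σ (j, true)) = d at *
  have := T a x c
  have := T a y c
  have := T b x d
  have := T b y d
  have := T a x d
  have := T a y d
  have := T c x b
  have := T c y b
  have := C x c
  have := C y c
  have := C b x
  have := C b y
  have := C x d
  have := C y d
  rcases hi with h | h <;> rcases hj with h' | h' <;> omega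

lemma hasEDC_le {V : Type*} [Fintype V] {G : SimpleGraph V} {m : ℕ} (h : HasEDC G m) :
    m ≤ Fintype.card (Sym2 V) := by
  obtain ⟨c, hc, hd⟩ := h
  have : ∀ i, ∃ e, e ∈ (c i).2.edges := fun i => by
    apply List.exists_mem_of_ne_nil
    intro h0
    have := (hc i).three_le_length
    rw [← SimpleGraph.Walk.length_edges, h0] at this
    simp at this
  choose e he using this
  have hinj : Function.Injective e := by
    intro i j hij
    by_contra hne
    exact hd i j hne _ (he i) (hij ▸ he j)
  simpa using Fintype.card_le_of_injective e hinj

lemma hasEDC_of_deg {V : Type*} [Fintype V] (G : SimpleGraph V) (v : V)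
    (hc : (G.induce ({v}ᶜ : Set V)).Connected) :
    HasEDC G (Nat.card (G.neighborSet v) / 2) := by
  set k := Nat.card (G.neighborSet v) / 2 with hk
  obtain ⟨g⟩ : Nonempty (Fin k × Bool ↪ G.neighborSet v) := by
    apply Function.Embedding.nonempty_of_card_le
    rw [← Nat.card_eq_fintype_card (α := G.neighborSet v)]
    rw [Fintype.card_prod, Fintype.card_fin, Fintype.card_bool]
    omega
  have hg : ∀ x, G.Adj v (g x) := fun x => (g x).2
  obtain ⟨σ, p, hp, hd⟩ := exists_pairing_s4 hc
    (fun x => (⟨(g x : V), by simpa using (hg x).ne'⟩ : ({v}ᶜ : Set V)))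
  let φ := SimpleGraph.Embedding.induce (G := G) ({v}ᶜ : Set V)
  let P : ∀ i : Fin k, G.Walk (g (σ (i, false)) : V) (g (σ (i, true)) : V) :=
    fun i => (p i).map φ.toHom
  have hPe : ∀ i, (P i).edges = (p i).edges.map (Sym2.map φ) := fun i =>
    SimpleGraph.Walk.edges_map _ _
  have hP : ∀ i, (P i).IsPath := fun i =>
    SimpleGraph.Walk.map_isPath_of_injective φ.injective (hp i)
  have hv : ∀ i, v ∉ (P i).support := by
    intro i h
    have h : v ∈ ((p i).map φ.toHom).support := h
    rw [SimpleGraph.Walk.support_map, List.mem_map] at h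
    obtain ⟨w, -, hw⟩ := h
    exact w.2 hw
  have hve : ∀ i u, s(v, u) ∉ (P i).edges := fun i u h =>
    hv i ((P i).fst_mem_support_of_mem_edges h)
  have hgne : ∀ x y, x ≠ y → (g (σ x) : V) ≠ g (σ y) := fun x y hxy h =>
    hxy (σ.injective (g.injective (Subtype.ext h)))
  have hPd : ∀ i j, i ≠ j → ∀ e ∈ (P i).edges, e ∉ (P j).edges := by
    intro i j hij e h1 h2
    rw [hPe, List.mem_map] at h1 h2
    obtain ⟨e1, h1, rfl⟩ := h1
    obtain ⟨e2, h2, h⟩ := h2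
    rw [Sym2.map.injective φ.injective h] at h2
    exact hd i j hij _ h1 h2
  refine ⟨fun i => ⟨v, SimpleGraph.Walk.cons (hg _) ((P i).concat (hg _).symm)⟩, ?_, ?_⟩
  · intro i
    rw [SimpleGraph.Walk.cons_isCycle_iff]
    refine ⟨(SimpleGraph.Walk.concat_isPath_iff _).2 ⟨hP i, hv i⟩, ?_⟩
    rw [SimpleGraph.Walk.edges_concat, List.concat_eq_append, List.mem_append, List.mem_singleton]
    rintro (h | h)
    · exact hve _ _ h
    · rw [Sym2.eq_swap, Sym2.congr_left] at h
      exact hgne _ _ (by simp) h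
  · intro i j hij e h1 h2
    have hm : ∀ l, e ∈ (SimpleGraph.Walk.cons (hg (σ (l, false)))
        ((P l).concat (hg (σ (l, true))).symm)).edges →
        e ∈ (P l).edges ∨ ∃ b, e = s(v, (g (σ (l, b)) : V)) := by
      intro l h
      rw [SimpleGraph.Walk.edges_cons, SimpleGraph.Walk.edges_concat, List.concat_eq_append,
        List.mem_cons, List.mem_append, List.mem_singleton] at h
      rcases h with h | h | h
      · exact Or.inr ⟨false, h⟩
      · exact Or.inl h
      · exact Or.inr ⟨true, h.trans Sym2.eq_swap⟩
    rcases hm i h1 with h1 | ⟨b, rfl⟩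
    · rcases hm j h2 with h2 | ⟨b', rfl⟩
      · exact hPd i j hij e h1 h2
      · exact hve _ _ h1
    · rcases hm j h2 with h2 | ⟨b', h⟩
      · exact hve _ _ h2
      · rw [Sym2.congr_right] at h
        exact hgne _ _ (by simp [hij]) h

/-- If `G` is 2-connected, then `φ(G) ≥ ⌊Δ(G)/2⌋`. -/
theorem phi_ge_of_twoConnected {V : Type*} [Fintype V] (G : SimpleGraph V)
    (h3 : 3 ≤ Fintype.card V)
    (h2c : ∀ v : V, (G.induce ({v}ᶜ : Set V)).Connected) :
    maxDeg G / 2 ≤ phi G := by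
  have hne : (Finset.univ : Finset V).Nonempty := by
    rw [← Finset.card_pos, Finset.card_univ]; omega
  obtain ⟨v, -, hv⟩ := Finset.exists_mem_eq_sup Finset.univ hne
    (fun v => Nat.card (G.neighborSet v))
  have : maxDeg G = Nat.card (G.neighborSet v) := hv
  rw [this]
  exact le_csSup ⟨_, fun m hm => hasEDC_le hm⟩ (hasEDC_of_deg G v (h2c v))

end PaperEDC
end

section
/- Let k ≥ 1 and let G be a simple graph with a dominating vertex u* such that φ(G) ≤ k−1. Suppose that the edge set of G − u* is the union of the edge sets of k−1 pairwise edge-disjoint triangles. Then every non-trivial connected component of G − u* is a triangle-cactus, the number of triangles of G − u* equals k−1, and φ(G) = k−1. -/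
open scoped Classical

namespace PaperEDC

open SimpleGraph in
theorem tri_cycle {V : Type*} {G : SimpleGraph V} {s : Finset V} (h : G.IsNClique 3 s) :
    ∃ c : Σ v : V, G.Walk v v, c.2.IsCycle ∧ (∀ x ∈ c.2.support, x ∈ s) ∧
      (∀ x ∈ s, ∀ y ∈ s, x ≠ y → s(x, y) ∈ c.2.edges) := by
  rw [is3Clique_iff] at h
  obtain ⟨a, b, c, hab, hac, hbc, rfl⟩ := h
  refine ⟨⟨a, .cons hab (.cons hbc (.cons hac.symm .nil))⟩, ?_, ?_, ?_⟩
  · rw [Walk.cons_isCycle_iff]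
    have := hab.ne
    have := hac.ne
    have := hbc.ne
    simp [Walk.cons_isPath_iff]
    grind
  · simp
  · simp
    try grind

theorem hasEDC_of_fintype {V ι : Type*} [Fintype ι] {G : SimpleGraph V}
    (c : ι → Σ v : V, G.Walk v v) (h1 : ∀ i, (c i).2.IsCycle)
    (h2 : ∀ i j, i ≠ j → ∀ e ∈ (c i).2.edges, e ∉ (c j).2.edges) :
    HasEDC G (Fintype.card ι) := by
  refine ⟨fun i => c ((Fintype.equivFin ι).symm i), fun i => h1 _, fun i j hij => h2 _ _ ?_⟩
  simpa using hij

theorem bddAbove_edc {V : Type*} [Fintype V] (G : SimpleGraph V) :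
    BddAbove {m | HasEDC G m} := by
  refine ⟨Fintype.card (Sym2 V), ?_⟩
  rintro m ⟨c, h1, h2⟩
  have hne : ∀ i, ∃ e, e ∈ (c i).2.edges := by
    intro i
    apply List.exists_mem_of_length_pos
    have := (h1 i).three_le_length
    rw [SimpleGraph.Walk.length_edges]
    omega
  choose f hf using hne
  have : Function.Injective f := by
    intro i j hij
    by_contra hne
    exact h2 i j hne (f i) (hf i) (hij ▸ hf j)
  simpa using Fintype.card_le_of_injective f this

/-- Switching lemma. -/
theorem switch {V : Type*} {G : SimpleGraph V} {t n : ℕ} {T : Fin t → Finset V}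
    (hT : ∀ i, G.IsNClique 3 (T i))
    (hS : ∀ i j a b, a ≠ b → a ∈ T i → b ∈ T i → a ∈ T j → b ∈ T j → i = j)
    {u : V} (hu : ∀ v, v ≠ u → G.Adj u v) (huT : ∀ i, u ∉ T i)
    {I : Fin n → Fin t} {a b : Fin n → V}
    (ha : ∀ l, a l ∈ T (I l)) (hb : ∀ l, b l ∈ T (I l))
    (hainj : Function.Injective a) (hbinj : Function.Injective b)
    (hab : ∀ l l', a l ≠ b l')
    {v : V} (C : G.Walk v v) (hC : C.IsCycle) (huC : u ∉ C.support)
    (hbC : ∀ l, b l ∉ C.support)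
    (hCe : ∀ x y, s(x, y) ∈ C.edges → ∃ l, x ∈ T (I l) ∧ y ∈ T (I l)) :
    HasEDC G (t + 1) := by
  have hQ : ∀ i, ∃ Q : Finset V, G.IsNClique 3 Q ∧
      ((∃ l, I l = i ∧ Q = {u, a l, b l}) ∨ ((∀ l, I l ≠ i) ∧ Q = T i)) := by
    intro i
    by_cases h : ∃ l, I l = i
    · obtain ⟨l, rfl⟩ := h
      refine ⟨{u, a l, b l}, ?_, Or.inl ⟨l, rfl, rfl⟩⟩
      rw [SimpleGraph.is3Clique_triple_iff]
      refine ⟨hu _ ?_, hu _ ?_, ?_⟩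
      · intro h; exact huT _ (h ▸ ha l)
      · intro h; exact huT _ (h ▸ hb l)
      · exact (hT (I l)).isClique (ha l) (hb l) (hab l l)
    · push Not at h
      exact ⟨T i, hT i, Or.inr ⟨h, rfl⟩⟩
  choose Q hQ1 hQ2 using hQ
  choose c hc1 hc2 hc3 using fun i => tri_cycle (hQ1 i)
  have key : ∀ i j, i ≠ j → ∀ x y, x ≠ y → x ∈ Q i → y ∈ Q i → x ∈ Q j → y ∈ Q j → False := by
    intro i j hij x y hxy hxi hyi hxj hyj
    rcases hQ2 i with ⟨l, hl, hq⟩ | ⟨hl, hq⟩ <;> rcases hQ2 j with ⟨l', hl', hq'⟩ | ⟨hl', hq'⟩ <;>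
      rw [hq] at hxi hyi <;> rw [hq'] at hxj hyj
    · have hll : l ≠ l' := by rintro rfl; exact hij (hl.symm.trans hl')
      have h1 := hab l l'
      have h2 := hab l' l
      have h3 := hainj.ne hll
      have h4 := hbinj.ne hll
      simp only [Finset.mem_insert, Finset.mem_singleton] at hxi hyi hxj hyj
      grind
    · have h1 := huT j
      have h2 := ha l
      have h3 := hb l
      rw [hl] at h2 h3
      simp only [Finset.mem_insert, Finset.mem_singleton] at hxi hyi
      refine hij (hS i j x y hxy ?_ ?_ hxj hyj) <;> grind
    · have h1 := huT i
      have h2 := ha l'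
      have h3 := hb l'
      rw [hl'] at h2 h3
      simp only [Finset.mem_insert, Finset.mem_singleton] at hxj hyj
      refine hij (hS i j x y hxy hxi hyi ?_ ?_) <;> grind
    · exact hij (hS i j x y hxy hxi hyi hxj hyj)
  have keyC : ∀ i x y, x ≠ y → s(x, y) ∈ C.edges → x ∈ Q i → y ∈ Q i → False := by
    intro i x y hxy he hx hy
    have hx' := C.fst_mem_support_of_mem_edges he
    have hy' := C.snd_mem_support_of_mem_edges he
    rcases hQ2 i with ⟨l, hl, hq⟩ | ⟨hl, hq⟩ <;> rw [hq] at hx hy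
    · have := hbC l
      simp only [Finset.mem_insert, Finset.mem_singleton] at hx hy
      grind
    · obtain ⟨l, h1, h2⟩ := hCe x y he
      exact hl l (hS _ _ x y hxy h1 h2 hx hy)
  have := hasEDC_of_fintype (ι := Option (Fin t)) (G := G)
    (fun o => o.elim ⟨v, C⟩ c) ?_ ?_
  · simpa using this
  · rintro (_ | i)
    · exact hC
    · exact hc1 i
  · have aux : ∀ i x y, s(x, y) ∈ (c i).2.edges → x ≠ y ∧ x ∈ Q i ∧ y ∈ Q i := by
      intro i x y h
      exact ⟨((c i).2.adj_of_mem_edges h).ne, hc2 i _ ((c i).2.fst_mem_support_of_mem_edges h),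
        hc2 i _ ((c i).2.snd_mem_support_of_mem_edges h)⟩
    rintro (_ | i) (_ | j) hij e he he' <;> induction e with | _ x y
    · exact hij rfl
    · obtain ⟨h1, h2, h3⟩ := aux j x y he'
      exact keyC j x y h1 he h2 h3
    · obtain ⟨h1, h2, h3⟩ := aux i x y he
      exact keyC i x y h1 he' h2 h3
    · obtain ⟨h1, h2, h3⟩ := aux i x y he
      obtain ⟨_, h2', h3'⟩ := aux j x y he'
      exact key i j (by simpa using hij) x y h1 h2 h3 h2' h3'

/-- Delete edges inside a vertex set. -/
def delT {W : Type*} (H : SimpleGraph W) (s : Finset W) : SimpleGraph W where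
  Adj a b := H.Adj a b ∧ ¬ (a ∈ s ∧ b ∈ s)
  symm := ⟨fun a b h => ⟨h.1.symm, fun h' => h.2 h'.symm⟩⟩
  loopless := ⟨fun a h => h.1.ne rfl⟩

theorem delT_le {W : Type*} (H : SimpleGraph W) (s : Finset W) : delT H s ≤ H := fun _ _ h => h.1

open SimpleGraph in
theorem exists_first {W : Type*} {H : SimpleGraph W} {s : Finset W} {v b : W} (p : H.Walk v b)
    (hb : b ∈ s) : ∃ b' ∈ s, b' ∈ p.support ∧ (delT H s).Reachable v b' := by
  induction p with
  | nil => exact ⟨_, hb, by simp, Reachable.refl _⟩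
  | @cons x y z h q ih =>
    by_cases hx : x ∈ s
    · exact ⟨x, hx, by simp, Reachable.refl _⟩
    · obtain ⟨b', h1, h2, h3⟩ := ih hb
      refine ⟨b', h1, by simp [h2], ?_⟩
      have : (delT H s).Adj x y := ⟨h, fun h' => hx h'.1⟩
      exact this.reachable.trans h3

open SimpleGraph in
theorem path_support {W : Type*} {H : SimpleGraph W} {s : Finset W}
    (hs : ∀ a ∈ s, ∀ b ∈ s, a ≠ b → ¬ (delT H s).Reachable a b)
    {v b : W} (p : H.Walk v b) (hp : p.IsPath) (hv : v ∈ s) (hb : b ∈ s) :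
    ∀ x ∈ p.support, x ∈ s := by
  induction p with
  | nil => simpa using hv
  | @cons x y z h q ih =>
    rw [Walk.cons_isPath_iff] at hp
    have hy : y ∈ s := by
      by_contra hy
      obtain ⟨b', h1, h2, h3⟩ := exists_first q hb
      have : (delT H s).Adj x y := ⟨h, fun h' => hy h'.2⟩
      refine hs x hv b' h1 ?_ (this.reachable.trans h3)
      rintro rfl
      exact hp.2 h2
    intro w hw
    rw [Walk.support_cons, List.mem_cons] at hw
    rcases hw with rfl | hw
    · exact hv
    · exact ih hp.1 hy hb w hw

open SimpleGraph in
theorem cycle_three {W : Type*} {H : SimpleGraph W} {s : Finset W} (hs3 : s.card = 3)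
    (hs : ∀ a ∈ s, ∀ b ∈ s, a ≠ b → ¬ (delT H s).Reachable a b)
    {v y : W} (p : H.Walk y v) (hp : p.IsPath) (hv : v ∈ s) (hy : y ∈ s) :
    p.length ≤ 2 := by
  have h1 := path_support hs p hp hy hv
  have h2 : p.support.toFinset ⊆ s := by
    intro x hx
    exact h1 x (by simpa using hx)
  have h3 := Finset.card_le_card h2
  rw [List.toFinset_card_of_nodup hp.support_nodup, Walk.length_support, hs3] at h3
  omega

theorem exists_third {W : Type*} {s : Finset W} (hs : s.card = 3) (a b : W) :
    ∃ c ∈ s, c ≠ a ∧ c ≠ b := by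
  by_contra! h
  have : s ⊆ {a, b} := by
    intro x hx
    have := h x hx
    simp only [Finset.mem_insert, Finset.mem_singleton]
    tauto
  have h1 := Finset.card_le_card this
  have h2 := Finset.card_le_two (a := a) (b := b)
  omega

open SimpleGraph in
theorem geo {V : Type*} {G : SimpleGraph V} {t : ℕ} {u : V} (hu : ∀ v, v ≠ u → G.Adj u v)
    {T : Fin t → Finset ({u}ᶜ : Set V)}
    (hT : ∀ i, (G.induce ({u}ᶜ : Set V)).IsNClique 3 (T i))
    (hS : ∀ i j a b, a ≠ b → a ∈ T i → b ∈ T i → a ∈ T j → b ∈ T j → i = j)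
    (hcov : ∀ a b, (G.induce ({u}ᶜ : Set V)).Adj a b → ∃ i, a ∈ T i ∧ b ∈ T i)
    (hno : ¬ HasEDC G (t + 1)) (j : Fin t) :
    ∀ a ∈ T j, ∀ b ∈ T j, a ≠ b → ¬ (delT (G.induce ({u}ᶜ : Set V)) (T j)).Reachable a b := by
  set H := G.induce ({u}ᶜ : Set V) with hH
  set H' := delT H (T j) with hH'
  intro a0 ha0 b0 hb0 hab0 ⟨p0⟩
  have hex : ∃ m : ℕ, ∃ x y : ({u}ᶜ : Set V), x ∈ T j ∧ y ∈ T j ∧ x ≠ y ∧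
      ∃ p : H'.Walk x y, p.length = m := ⟨_, a0, b0, ha0, hb0, hab0, p0, rfl⟩
  obtain ⟨x, y, hx, hy, hxy, p, hpm⟩ := Nat.find_spec hex
  have hmin : ∀ x' y' : ({u}ᶜ : Set V), x' ∈ T j → y' ∈ T j → x' ≠ y' → ∀ q : H'.Walk x' y',
      Nat.find hex ≤ q.length := fun x' y' h1 h2 h3 q =>
    Nat.find_min' hex ⟨x', y', h1, h2, h3, q, rfl⟩
  rw [← hpm] at hmin
  clear hpm
  have hp : p.IsPath := by
    have h1 : p.length ≤ p.bypass.length := hmin x y hx hy hxy _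
    have h2 := p.length_bypass_le_length
    have h3 : p.bypass = p := Walk.bypass_eq_self_of_length_le_length_bypass p h1
    rw [← h3]
    exact p.bypass_isPath
  obtain ⟨z, hz, hzx, hzy⟩ := exists_third (hT j).card_eq x y
  obtain ⟨m, hm⟩ : ∃ m, m = p.length := ⟨_, rfl⟩
  have F1 : ∀ l l', l ≤ l' → l' ≤ m → ∀ q : H'.Walk (p.getVert l) (p.getVert l'),
      l' - l ≤ q.length := by
    intro l l' h1 h2 q
    have := hmin x y hx hy hxy (((p.take l).append q).append (p.drop l'))
    simp only [Walk.length_append, Walk.take_length, Walk.drop_length] at this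
    omega
  have F2 : ∀ l, l ≤ m → ∀ q : H'.Walk (p.getVert l) z, m ≤ l + q.length ∧ l ≤ q.length := by
    intro l h1 q
    have h2 := hmin x z hx hz hzx.symm ((p.take l).append q)
    have h3 := hmin z y hz hy hzy (q.reverse.append (p.drop l))
    simp only [Walk.length_append, Walk.take_length, Walk.drop_length,
      Walk.length_reverse] at h2 h3
    omega
  have hadjT : ∀ i, i ≠ j → ∀ c ∈ T i, ∀ d ∈ T i, c ≠ d → H'.Adj c d := by
    intro i hij c hc d hd hcd
    refine ⟨(hT i).isClique hc hd hcd, fun h => hij (hS i j c d hcd hc hd h.1 h.2)⟩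
  have hm2 : 2 ≤ m := by
    by_contra hlt
    have : m = 0 ∨ m = 1 := by omega
    rcases this with h | h
    · exact hxy (Walk.eq_of_length_eq_zero (hm.symm.trans h))
    · have := Walk.adj_of_length_eq_one (hm.symm.trans h)
      exact this.2 ⟨hx, hy⟩
  have hdata : ∀ l : Fin (m + 1), ∃ i b, p.getVert l ∈ T i ∧ b ∈ T i ∧ b ≠ p.getVert l ∧
      (((l : ℕ) < m ∧ i ≠ j ∧ p.getVert (l + 1) ∈ T i ∧ b ≠ p.getVert (l + 1)) ∨
        ((l : ℕ) = m ∧ i = j ∧ b = z)) := by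
    rintro ⟨l, hl⟩
    by_cases hlm : l < m
    · have hadj : H'.Adj (p.getVert l) (p.getVert (l + 1)) :=
        p.adj_getVert_succ (by omega)
      obtain ⟨i, hi1, hi2⟩ := hcov _ _ hadj.1
      obtain ⟨b, hb, hb1, hb2⟩ := exists_third (hT i).card_eq (p.getVert l) (p.getVert (l + 1))
      refine ⟨i, b, hi1, hb, hb1, Or.inl ⟨hlm, ?_, hi2, hb2⟩⟩
      rintro rfl
      exact hadj.2 ⟨hi1, hi2⟩
    · have hlm' : l = m := by omega
      have hv : p.getVert l = y := by rw [hlm', hm, Walk.getVert_length]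
      refine ⟨j, z, ?_, hz, ?_, Or.inr ⟨hlm', rfl, rfl⟩⟩
      · simpa [hv] using hy
      · simpa [hv] using hzy
  choose I b hIa hIb hba hcase using hdata
  -- `b l` is not on the path
  have hbp : ∀ (l : Fin (m + 1)) (k : ℕ), k ≤ m → b l ≠ p.getVert k := by
    intro l k hk he
    rcases hcase l with ⟨hlm, hij, hn, hbn⟩ | ⟨hlm, hij, hbz⟩
    · have h1 : H'.Adj (p.getVert k) (p.getVert l) :=
        he ▸ hadjT _ hij _ (hIb l) _ (hIa l) (hba l)
      have h2 : H'.Adj (p.getVert k) (p.getVert (l + 1)) :=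
        he ▸ hadjT _ hij _ (hIb l) _ hn hbn
      have hk1 : k ≠ l := by rintro rfl; exact h1.ne rfl
      have hk2 : k ≠ l + 1 := by rintro rfl; exact h2.ne rfl
      rcases lt_or_gt_of_ne hk1 with h | h
      · have := F1 k (l + 1) (by omega) (by omega) h2.toWalk
        simp only [Walk.length_cons, Walk.length_nil] at this
        omega
      · have := F1 l k (by omega) (by omega) h1.symm.toWalk
        simp only [Walk.length_cons, Walk.length_nil] at this
        omega
    · rw [hbz] at he
      have := F2 k hk (Walk.nil.copy rfl he.symm)
      simp only [Walk.length_copy, Walk.length_nil] at this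
      omega
  have hainj : ∀ k k', k ≤ m → k' ≤ m → p.getVert k = p.getVert k' → k = k' := by
    intro k k' h1 h2 h
    exact hp.getVert_injOn (by simpa [← hm] using h1) (by simpa [← hm] using h2) h
  have hbz : ∀ l : Fin (m + 1), (l : ℕ) < m → b l ≠ z := by
    intro l hl he
    rcases hcase l with ⟨hlm, hij, hn, hbn⟩ | ⟨hlm, _, _⟩
    · have h1 : H'.Adj (p.getVert l) z := he ▸ hadjT _ hij _ (hIa l) _ (hIb l) (hba l).symm
      have h2 : H'.Adj (p.getVert (l + 1)) z := he ▸ hadjT _ hij _ hn _ (hIb l) hbn.symm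
      have h3 := F2 l (by omega) h1.toWalk
      have h4 := F2 (l + 1) (by omega) h2.toWalk
      simp only [Walk.length_cons, Walk.length_nil] at h3 h4
      omega
    · omega
  have hblt : ∀ l l' : Fin (m + 1), l < l' → b l ≠ b l' := by
    intro l l' hll he
    have hll' : (l : ℕ) < l' := hll
    rcases hcase l with ⟨hlm, hij, hn, hbn⟩ | ⟨hlm, _, _⟩
    · rcases hcase l' with ⟨hlm', hij', hn', hbn'⟩ | ⟨hlm', _, hbz'⟩
      · have h1 : H'.Adj (p.getVert l) (b l) := hadjT _ hij _ (hIa l) _ (hIb l) (hba l).symm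
        have h2 : H'.Adj (b l) (p.getVert (l' + 1)) :=
          he ▸ hadjT _ hij' _ (hIb l') _ hn' hbn'
        have h3 := F1 l (l' + 1) (by omega) (by omega) (Walk.cons h1 h2.toWalk)
        simp only [Walk.length_cons, Walk.length_nil] at h3
        have h4 : (l' : ℕ) = l + 1 := by omega
        have h5 : I l = I l' := hS _ _ (b l) (p.getVert (l + 1)) hbn (hIb l) hn
          (he ▸ hIb l') (h4 ▸ hIa l')
        have h6 : H'.Adj (p.getVert l) (p.getVert (l' + 1)) := by
          refine hadjT _ hij _ (hIa l) _ (h5 ▸ hn') ?_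
          intro h
          have := hainj _ _ (by omega) (by omega) h
          omega
        have h7 := F1 l (l' + 1) (by omega) (by omega) h6.toWalk
        simp only [Walk.length_cons, Walk.length_nil] at h7
        omega
      · exact hbz l hlm (he.trans hbz')
    · have := l'.isLt
      omega
  have hbinj : Function.Injective b := by
    intro l l' h
    rcases lt_trichotomy l l' with h1 | h1 | h1
    · exact absurd h (hblt _ _ h1)
    · exact h1
    · exact absurd h.symm (hblt _ _ h1)
  have hyx : H.Adj y x := (hT j).isClique hy hx hxy.symm
  let f : H →g G := (Embedding.induce ({u}ᶜ : Set V)).toHom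
  have hf : ∀ w, f w = w.1 := fun _ => rfl
  have hfinj : Function.Injective f := Subtype.val_injective
  let C : H.Walk y y := Walk.cons hyx (p.mapLe (delT_le H (T j)))
  have hC : C.IsCycle := by
    rw [Walk.cons_isCycle_iff]
    refine ⟨hp.mapLe _, ?_⟩
    intro h
    rw [Walk.edges_mapLe_eq_edges] at h
    exact (p.adj_of_mem_edges h).2 ⟨hy, hx⟩
  have hCs : ∀ w, w ∈ C.support → ∃ k ≤ m, p.getVert k = w := by
    intro w hw
    have hw' : w ∈ p.support := by
      simp only [C, Walk.support_cons, Walk.support_mapLe_eq_support, List.mem_cons] at hw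
      rcases hw with rfl | hw
      · exact p.end_mem_support
      · exact hw
    rw [Walk.mem_support_iff_exists_getVert] at hw'
    obtain ⟨n, h1, h2⟩ := hw'
    exact ⟨n, by omega, h1⟩
  have hCe : ∀ c d, s(c, d) ∈ C.edges → ∃ l, c ∈ T (I l) ∧ d ∈ T (I l) := by
    intro c d h
    simp only [C, Walk.edges_cons, Walk.edges_mapLe_eq_edges, List.mem_cons] at h
    rcases h with h | h
    · refine ⟨⟨m, by omega⟩, ?_⟩
      have : I ⟨m, by omega⟩ = j := by
        rcases hcase ⟨m, by omega⟩ with ⟨h, _⟩ | ⟨_, h, _⟩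
        · exact absurd h (lt_irrefl m)
        · exact h
      rw [this]
      rw [Sym2.eq_iff] at h
      rcases h with ⟨rfl, rfl⟩ | ⟨rfl, rfl⟩
      · exact ⟨hy, hx⟩
      · exact ⟨hx, hy⟩
    · rw [Walk.mk_mem_edges_iff_exists] at h
      obtain ⟨l, hl, h⟩ := h
      refine ⟨⟨l, by omega⟩, ?_⟩
      have h1 := hIa ⟨l, by omega⟩
      have h2 : p.getVert (l + 1) ∈ T (I ⟨l, by omega⟩) := by
        rcases hcase ⟨l, by omega⟩ with ⟨_, _, h, _⟩ | ⟨h, _⟩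
        · exact h
        · simp only at h; omega
      rw [Sym2.eq_iff] at h
      rcases h with ⟨rfl, rfl⟩ | ⟨rfl, rfl⟩
      · exact ⟨h1, h2⟩
      · exact ⟨h2, h1⟩
  apply hno
  let g : ({u}ᶜ : Set V) ↪ V := Function.Embedding.subtype _
  have hT' : ∀ i, G.IsNClique 3 ((T i).map g) := by
    intro i
    have h1 := (hT i).map (f := g)
    exact h1.mono (by rw [hH]; exact SimpleGraph.map_comap_le g G)
  have hmem : ∀ i c, c ∈ (T i).map g ↔ ∃ w ∈ T i, w.1 = c := by
    intro i c; rw [Finset.mem_map]; rfl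
  refine switch (T := fun i => (T i).map g) hT' ?_ hu ?_ (I := I)
    (a := fun l => (p.getVert l).1) (b := fun l => (b l).1) ?_ ?_ ?_ ?_ ?_
    (C.map f) (hC.map hfinj) ?_ ?_ ?_
  · intro i i' c d hcd h1 h2 h3 h4
    rw [hmem] at h1 h2 h3 h4
    obtain ⟨c1, hc1, rfl⟩ := h1
    obtain ⟨d1, hd1, rfl⟩ := h2
    obtain ⟨c2, hc2, e1⟩ := h3
    obtain ⟨d2, hd2, e2⟩ := h4
    obtain rfl := Subtype.ext e1
    obtain rfl := Subtype.ext e2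
    exact hS i i' c2 d2 (fun h => hcd (by rw [h])) hc1 hd1 hc2 hd2
  · intro i h
    rw [hmem] at h
    obtain ⟨w, _, hw⟩ := h
    exact w.2 hw
  · intro l; exact (hmem _ _).2 ⟨_, hIa l, rfl⟩
  · intro l; exact (hmem _ _).2 ⟨_, hIb l, rfl⟩
  · intro l l' h
    exact Fin.ext (hainj _ _ (by omega) (by omega) (Subtype.ext h))
  · intro l l' h
    exact hbinj (Subtype.ext h)
  · intro l l' h
    exact hbp l' l (by omega) (Subtype.ext h).symm
  · intro h
    rw [Walk.support_map, List.mem_map] at h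
    obtain ⟨w, _, hw⟩ := h
    exact w.2 hw
  · intro l h
    rw [Walk.support_map, List.mem_map] at h
    obtain ⟨w, hw1, hw⟩ := h
    obtain ⟨k, hk, hk'⟩ := hCs w hw1
    exact hbp l k hk ((Subtype.ext hw).symm.trans hk'.symm)
  · intro c d h
    rw [Walk.edges_map, List.mem_map] at h
    obtain ⟨e, he, h⟩ := h
    induction e with | _ c' d'
    obtain ⟨l, h1, h2⟩ := hCe c' d' he
    refine ⟨l, ?_⟩
    rw [Sym2.map_mk, Sym2.eq_iff] at h
    rcases h with ⟨rfl, rfl⟩ | ⟨rfl, rfl⟩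
    · exact ⟨(hmem _ _).2 ⟨_, h1, rfl⟩, (hmem _ _).2 ⟨_, h2, rfl⟩⟩
    · exact ⟨(hmem _ _).2 ⟨_, h2, rfl⟩, (hmem _ _).2 ⟨_, h1, rfl⟩⟩

open SimpleGraph in
theorem tri_of_cycle_s5 {V : Type*} {G : SimpleGraph V} {v : V} (w : G.Walk v v) (hl : w.length = 3) :
    ∃ s : Finset V, G.IsNClique 3 s ∧
      ∀ a b, s(a, b) ∈ w.edges ↔ (a ≠ b ∧ a ∈ s ∧ b ∈ s) := by
  match w, hl with
  | .cons (v := b) hab (.cons (v := c) hbc (.cons hca .nil)), _ =>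
    refine ⟨{v, b, c}, is3Clique_triple_iff.2 ⟨hab, hca.symm, hbc⟩, ?_⟩
    intro x y
    have := hab.ne
    have := hbc.ne
    have := hca.ne
    simp
    grind

open SimpleGraph in
/-- If `G` has a dominating vertex `u*`, `φ(G) ≤ k-1`, and the edge set of `G - u*` is the
union of `k-1` pairwise edge-disjoint triangles, then every non-trivial component of
`G - u*` is a triangle-cactus, `t(G - u*) = k-1` and `φ(G) = k-1`. -/
theorem triangleCactus_structure {V : Type*} [Fintype V] (k : ℕ) (hk : 1 ≤ k)
    (G : SimpleGraph V) (u : V) (hu : ∀ v, v ≠ u → G.Adj u v) (hphi : phi G ≤ k - 1)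
    (hdecomp : ∃ c : Fin (k - 1) → Σ v : ({u}ᶜ : Set V), (G.induce ({u}ᶜ : Set V)).Walk v v,
      (∀ i, (c i).2.IsCycle ∧ (c i).2.length = 3) ∧
      (∀ i j, i ≠ j → ∀ e ∈ (c i).2.edges, e ∉ (c j).2.edges) ∧
      (∀ e ∈ (G.induce ({u}ᶜ : Set V)).edgeSet, ∃ i, e ∈ (c i).2.edges)) :
    (∀ c : (G.induce ({u}ᶜ : Set V)).ConnectedComponent, c.supp.Nontrivial →
      IsTriangleCactus ((G.induce ({u}ᶜ : Set V)).induce c.supp)) ∧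
    triCount (G.induce ({u}ᶜ : Set V)) = k - 1 ∧ phi G = k - 1 := by
  obtain ⟨c, hc1, hc2, hc3⟩ := hdecomp
  choose T hT hTe using fun i => tri_of_cycle_s5 (c i).2 (hc1 i).2
  have hS : ∀ i j a b, a ≠ b → a ∈ T i → b ∈ T i → a ∈ T j → b ∈ T j → i = j := by
    intro i j a b hab h1 h2 h3 h4
    by_contra hij
    exact hc2 i j hij s(a, b) ((hTe i a b).2 ⟨hab, h1, h2⟩) ((hTe j a b).2 ⟨hab, h3, h4⟩)
  have hcov : ∀ a b, (G.induce ({u}ᶜ : Set V)).Adj a b → ∃ i, a ∈ T i ∧ b ∈ T i := by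
    intro a b hab
    obtain ⟨i, hi⟩ := hc3 s(a, b) hab
    exact ⟨i, ((hTe i a b).1 hi).2⟩
  have hno : ¬ HasEDC G (k - 1 + 1) := by
    intro h
    have : k - 1 + 1 ≤ phi G := le_csSup (bddAbove_edc G) h
    omega
  have hgeo := geo hu hT hS hcov hno
  refine ⟨?_, ?_, le_antisymm hphi ?_⟩
  · intro K _
    refine ⟨(ConnectedComponent.maximal_connected_induce_supp K).prop, ?_, ?_⟩
    · intro e he
      induction e with | _ a b
      have hab : (G.induce ({u}ᶜ : Set V)).Adj a.1 b.1 := he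
      obtain ⟨i, hai, hbi⟩ := hcov _ _ hab
      obtain ⟨d, hd, hda, hdb⟩ := exists_third (hT i).card_eq a.1 b.1
      have had : (G.induce ({u}ᶜ : Set V)).Adj a.1 d := (hT i).isClique hai hd hda.symm
      have hbd : (G.induce ({u}ᶜ : Set V)).Adj b.1 d := (hT i).isClique hbi hd hdb.symm
      have hdK : d ∈ K.supp := K.mem_supp_of_adj_mem_supp a.2 had
      have h3 : ((G.induce ({u}ᶜ : Set V)).induce K.supp).IsNClique 3 {a, b, ⟨d, hdK⟩} :=
        is3Clique_triple_iff.2 ⟨hab, had, hbd⟩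
      obtain ⟨⟨v, w⟩, h1, _, h2⟩ := tri_cycle h3
      exact ⟨v, w, h1, h2 a (by simp) b (by simp) (fun h => hab.ne (by rw [h]))⟩
    · intro v w hw
      have hw' := hw.map (f := (Embedding.induce K.supp).toHom) Subtype.val_injective
      have hlen := Walk.length_map (Embedding.induce K.supp).toHom w
      have h3 := hw.three_le_length
      generalize Walk.map (Embedding.induce K.supp).toHom w = w' at hw' hlen
      cases w' with
      | nil => exact absurd hw'.three_le_length (by simp)
      | cons h q =>
        rw [Walk.cons_isCycle_iff] at hw'
        obtain ⟨i, h1, h2⟩ := hcov _ _ h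
        have := cycle_three (hT i).card_eq (hgeo i) q hw'.1 h1 h2
        rw [Walk.length_cons] at hlen
        omega
  · have hbij : Function.Bijective (fun i : Fin (k - 1) =>
        (⟨T i, hT i⟩ : {s : Finset ({u}ᶜ : Set V) // (G.induce ({u}ᶜ : Set V)).IsNClique 3 s})) := by
      constructor
      · intro i j hij
        have hij' : T i = T j := congrArg Subtype.val hij
        obtain ⟨a, b, d, hab, _, _, h⟩ := is3Clique_iff.1 (hT i)
        have ha : a ∈ T i := by rw [h]; simp
        have hb : b ∈ T i := by rw [h]; simp
        exact hS i j a b hab.ne ha hb (hij' ▸ ha) (hij' ▸ hb)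
      · rintro ⟨s, hs⟩
        obtain ⟨a, b, d, hab, had, hbd, h⟩ := is3Clique_iff.1 hs
        obtain ⟨i, ha, hb⟩ := hcov a b hab
        have hp := path_support (hgeo i) (Walk.cons had (Walk.cons hbd.symm Walk.nil))
          (by
            have := hab.ne
            have := had.ne
            have := hbd.ne
            simp [Walk.cons_isPath_iff]
            grind) ha hb
        refine ⟨i, Subtype.ext ?_⟩
        symm
        apply Finset.eq_of_subset_of_card_le
        · intro x hx
          have hx' : x = a ∨ x = b ∨ x = d := by simpa [h] using hx
          apply hp
          simp
          tauto
        · simp only [hs.card_eq, (hT i).card_eq]; exact le_rfl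
    unfold triCount
    rw [← Nat.card_congr (Equiv.ofBijective _ hbij)]
    simp
  · refine le_csSup (bddAbove_edc G) ?_
    refine ⟨fun i => ⟨_, (c i).2.map (Embedding.induce ({u}ᶜ : Set V)).toHom⟩, ?_, ?_⟩
    · intro i
      exact (hc1 i).1.map Subtype.val_injective
    · intro i j hij e h1 h2
      dsimp only at h1 h2
      rw [Walk.edges_map, List.mem_map] at h1 h2
      obtain ⟨e1, he1, rfl⟩ := h1
      obtain ⟨e2, he2, h⟩ := h2
      have : e2 = e1 := Sym2.map.injective Subtype.val_injective h
      subst this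
      exact hc2 i j hij _ he1 he2

end PaperEDC
end
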